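/- There exists γ₀ > 0 such that for every integer p ≥ 1 and every real Λ > 0, the Markov chain (P_n)_{n≥0} started from P₀ = p satisfies ℙ_p(T₀ > Λ·p) ≤ Λ^{−γ₀}, where T₀ = inf{n ≥ 0 : P_n = 0}; in particular T₀ < ∞ ℙ_p-almost surely. -/

import Mathlib

noncomputable def nuc : ℝ := 1 + 2 * Real.sqrt 7

noncomputable def tc : ℝ := Real.sqrt 10 / (8 * (7 + Real.sqrt 7) ^ ((3:ℝ)/2))

noncomputable def uc : ℝ := (6/5) * (7 + Real.sqrt 7) * tc

/-- The rational parametrization `û` of the `u`-variable. -/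
noncomputable def uhat (H : ℂ) : ℂ :=
  ((uc : ℂ) / 3) * H * (10 - 12 * H + 6 * H ^ 2 - H ^ 3)

/-- The rational parametrization `Ẑ₀`. -/
noncomputable def Z0hat (H : ℂ) : ℂ :=
  (1/10) * (1 - (1 - (Real.sqrt 7 : ℂ)) * H + 3 * H ^ 2 - H ^ 3)
    * (10 - 12 * H + 6 * H ^ 2 - H ^ 3)

/-- The rational parametrization `Ẑ₁`. -/
noncomputable def Z1hat (H : ℂ) : ℂ :=
  (3 / (10 * (uc : ℂ))) *
    ((Real.sqrt 7 : ℂ) - 1 + H - 3 * (4 - 3 * H + H ^ 2) / (10 - 12 * H + 6 * H ^ 2 - H ^ 3))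

/-- The rational parametrization `Â`. -/
noncomputable def Ahat (H : ℂ) : ℂ :=
  (1/10) * ((((3:ℝ)/2) ^ ((7:ℝ)/3) : ℝ) : ℂ) * (9 - 8 * H + 3 * H ^ 2) / (3 - 3 * H + H ^ 2) ^ 2

/-!
Each step raises the chain by at most `2`, so a chain started from `p` is at most `p + 2 n` at time
`n`. From a state `q ≥ 1` it jumps straight to `0` with probability at least
`ν_c t_c z_{q,1} a₀ / a_q`. If this is at least `c / q`, then the survival probability up to time
`n` is at most `∏_{i < n} (1 - c / (p + 2 i)) ≤ (p / (p + 2 n))^(c / 2)`, and the tail bound holds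
with exponent `c / 2`.

The estimate `a_q = O(q z_{q,1})` needs no singularity analysis. The coefficient of `v` in the
kernel equation parametrizes `G(u) = u² ∑ z_{p,1} uᵖ` rationally by `u = û(x)`, and
`û'(x) = (2/3) u_c (1 - x)² (5 - 2 x)`. In the variable `x`, the function `u_c G''` is
`(1 - x)⁻² (5 - 2 x)⁻¹ / 50` plus a rational function with nonnegative Taylor coefficients, while
the derivative of `u A(u)` is `(3 / (2 u_c)) f(x) (1 - x)⁻² (5 - 2 x)⁻¹` with `f` holomorphic in a
disc of radius larger than `1`. The Taylor series of `f` converges absolutely at `1`, so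
`(C - f(x)) / (1 - x)` has nonnegative Taylor coefficients for large `C`; hence so does
`G'' - c (u A)'` as a function of `x`, for small `c > 0`. Since `1 / û'` also has nonnegative
Taylor coefficients, this passes to the coefficients in `u`: by the chain rule, each derivative in
`u` is obtained from a derivative in `x` by multiplication by `1 / û'`.
-/

open Filter Topology
open scoped ComplexOrder ComplexConjugate

section PowerSeries

variable {f F φ m : ℂ → ℂ} {c : ℕ → ℂ}

theorem hasFPowerSeriesAt_zero_of_eventually_hasSum
    (h : ∀ᶠ u in 𝓝 0, HasSum (fun n => c n * u ^ n) (f u)) :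
    HasFPowerSeriesAt f (.ofScalars ℂ c) 0 := by
  rw [hasFPowerSeriesAt_iff]
  filter_upwards [h] with u hu
  simpa [FormalMultilinearSeries.coeff_ofScalars, mul_comm] using hu

theorem iteratedDeriv_zero_of_eventually_hasSum
    (h : ∀ᶠ u in 𝓝 0, HasSum (fun n => c n * u ^ n) (f u)) (n : ℕ) :
    iteratedDeriv n f 0 = n.factorial * c n := by
  have hf := hasFPowerSeriesAt_zero_of_eventually_hasSum h
  have hcoeff := congrArg (fun p => FormalMultilinearSeries.coeff p n)
    (hf.analyticAt.hasFPowerSeriesAt.eq_formalMultilinearSeries hf)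
  simp only [FormalMultilinearSeries.coeff_ofScalars] at hcoeff
  rw [← hcoeff]
  field_simp

theorem eventually_hasSum_tsum_of_summable {u₀ : ℂ} (hu₀ : u₀ ≠ 0)
    (h : Summable fun n => c n * u₀ ^ n) :
    ∀ᶠ u in 𝓝 0, HasSum (fun n => c n * u ^ n) (∑' n, c n * u ^ n) := by
  filter_upwards [Metric.ball_mem_nhds (0 : ℂ) (norm_pos_iff.2 hu₀)] with u hu
  exact (summable_powerSeries_of_norm_lt h.hasSum.tendsto_sum_nat.cauchySeq
    (mem_ball_zero_iff.1 hu)).hasSum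

theorem exists_ne_zero_of_deriv_ne_zero (hφ1 : deriv φ 0 ≠ 0) {P : ℂ → Prop}
    (h : ∀ᶠ x in 𝓝 0, P x) : ∃ x, P x ∧ φ x ≠ 0 := by
  have hφ := (differentiableAt_of_deriv_ne_zero hφ1).hasDerivAt.eventually_ne (c := 0) hφ1
  exact ((h.filter_mono nhdsWithin_le_nhds).and hφ).exists

theorem exists_eventually_hasSum_of_comp (hφ1 : deriv φ 0 ≠ 0)
    (h : ∀ᶠ x in 𝓝 0, HasSum (fun n => c n * φ x ^ n) (m x)) :
    ∃ F : ℂ → ℂ, (∀ᶠ u in 𝓝 0, HasSum (fun n => c n * u ^ n) (F u)) ∧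
      ∀ᶠ x in 𝓝 0, F (φ x) = m x := by
  obtain ⟨x₀, hx₀, hne⟩ := exists_ne_zero_of_deriv_ne_zero hφ1 h
  exact ⟨_, eventually_hasSum_tsum_of_summable hne hx₀.summable, h.mono fun x hx => hx.tsum_eq⟩

theorem iteratedDeriv_succ_id_mul_zero (hf : AnalyticAt ℂ f 0) (n : ℕ) :
    iteratedDeriv (n + 1) (fun u => u * f u) 0 = (n + 1) * iteratedDeriv n f 0 := by
  rw [iteratedDeriv_fun_mul (by fun_prop) hf.contDiffAt, Finset.sum_eq_single 1]
  · simp [iteratedDeriv_fun_id_zero]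
  · intro i _ hi
    simp [iteratedDeriv_fun_id_zero, hi]
  · simp

theorem eventually_deriv_comp_mul_deriv (hF : AnalyticAt ℂ F 0) (hφ : AnalyticAt ℂ φ 0)
    (hφ0 : φ 0 = 0) (h : ∀ᶠ x in 𝓝 0, F (φ x) = m x) :
    ∀ᶠ x in 𝓝 0, deriv F (φ x) * deriv φ x = deriv m x := by
  have hFφ : ∀ᶠ x in 𝓝 0, AnalyticAt ℂ F (φ x) :=
    hφ.continuousAt.eventually (by simpa [hφ0] using hF.eventually_analyticAt)
  filter_upwards [h.eventually_nhds, hFφ, hφ.eventually_analyticAt] with x hx hFx hφx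
  rw [← (EventuallyEq.deriv_eq hx : deriv (F ∘ φ) x = _),
    (hFx.differentiableAt.hasDerivAt.comp x hφx.differentiableAt.hasDerivAt).deriv]

theorem eventually_deriv_comp_eq {m' : ℂ → ℂ} (hF : AnalyticAt ℂ F 0) (hφ : AnalyticAt ℂ φ 0)
    (hφ0 : φ 0 = 0) (hφ1 : deriv φ 0 ≠ 0) (h : ∀ᶠ x in 𝓝 0, F (φ x) = m x)
    (hm : ∀ᶠ x in 𝓝 0, deriv m x = m' x * deriv φ x) :
    ∀ᶠ x in 𝓝 0, deriv F (φ x) = m' x := by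
  filter_upwards [eventually_deriv_comp_mul_deriv hF hφ hφ0 h, hm,
    hφ.deriv.continuousAt.eventually_ne hφ1] with x hx hmx hx1
  exact mul_right_cancel₀ hx1 (hx.trans hmx)

theorem coeff_one_eq_of_hasSum_add_mul (hφ : AnalyticAt ℂ φ 0) (hφ0 : φ 0 = 0)
    (hφ1 : deriv φ 0 ≠ 0) {b : ℂ} {g : ℂ → ℂ} (hg : DifferentiableAt ℂ g 0)
    (h : ∀ᶠ x in 𝓝 0, HasSum (fun n => c n * φ x ^ n) (b + φ x * g x)) : c 1 = g 0 := by
  obtain ⟨F, hF, hFφ⟩ := exists_eventually_hasSum_of_comp hφ1 h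
  have hc : deriv F 0 = c 1 := by
    simpa using iteratedDeriv_zero_of_eventually_hasSum hF 1
  have hderiv := (eventually_deriv_comp_mul_deriv
    (hasFPowerSeriesAt_zero_of_eventually_hasSum hF).analyticAt hφ hφ0 hFφ).self_of_nhds
  rw [((hφ.differentiableAt.hasDerivAt.fun_mul hg.hasDerivAt).const_add b).deriv, hφ0, hc,
    zero_mul, add_zero, mul_comm] at hderiv
  exact mul_left_cancel₀ hφ1 hderiv

theorem summable_left_of_summable_prod_mul_pow {w : ℕ → ℕ → ℂ} {v : ℂ} (hv : v ≠ 0)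
    (h : Summable fun pq : ℕ × ℕ => w pq.1 pq.2 * v ^ pq.2) (q : ℕ) :
    Summable fun p => w p q := by
  have hsymm : Summable fun qp : ℕ × ℕ => w qp.2 qp.1 * v ^ qp.1 := h.prod_symm
  have hq : Summable fun p => w p q * v ^ q := hsymm.prod_factor q
  exact (summable_mul_right_iff (pow_ne_zero q hv)).1 hq

theorem hasSum_tsum_left_mul_pow {w : ℕ → ℕ → ℂ} {v s : ℂ} (hw : ∀ q, Summable fun p => w p q)
    (h : HasSum (fun pq : ℕ × ℕ => w pq.1 pq.2 * v ^ pq.2) s) :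
    HasSum (fun q => (∑' p, w p q) * v ^ q) s := by
  have hsymm : HasSum (fun qp : ℕ × ℕ => w qp.2 qp.1 * v ^ qp.1) s :=
    (Equiv.prodComm ℕ ℕ).hasSum_iff (f := fun pq : ℕ × ℕ => w pq.1 pq.2 * v ^ pq.2) |>.2 h
  have hfib (q : ℕ) : HasSum (fun p => w p q * v ^ q) ((∑' p, w p q) * v ^ q) :=
    (hw q).hasSum.mul_right (v ^ q)
  exact hsymm.prod_fiberwise hfib

end PowerSeries

/-- The function `f` is analytic at `0` and its Taylor coefficients there are nonnegative reals,
expressed through the partial order on `ℂ`, in which `0 ≤ w` means that `w` is real and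
nonnegative. -/
structure NonnegTaylor (f : ℂ → ℂ) : Prop where
  analyticAt : AnalyticAt ℂ f 0
  nonneg : ∀ n, 0 ≤ iteratedDeriv n f 0

namespace NonnegTaylor

variable {f g : ℂ → ℂ}

theorem const {c : ℝ} (hc : 0 ≤ c) : NonnegTaylor fun _ => (c : ℂ) :=
  ⟨analyticAt_const, fun n => by rw [iteratedDeriv_const]; split_ifs <;> simp [hc]⟩

theorem id : NonnegTaylor fun x => x :=
  ⟨analyticAt_id, fun n => by rw [iteratedDeriv_fun_id_zero]; split_ifs <;> simp⟩

theorem add (hf : NonnegTaylor f) (hg : NonnegTaylor g) : NonnegTaylor fun x => f x + g x := by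
  refine ⟨hf.analyticAt.fun_add hg.analyticAt, fun n => ?_⟩
  rw [iteratedDeriv_fun_add hf.analyticAt.contDiffAt hg.analyticAt.contDiffAt]
  exact add_nonneg (hf.nonneg n) (hg.nonneg n)

theorem mul (hf : NonnegTaylor f) (hg : NonnegTaylor g) : NonnegTaylor fun x => f x * g x := by
  refine ⟨hf.analyticAt.fun_mul hg.analyticAt, fun n => ?_⟩
  rw [iteratedDeriv_fun_mul hf.analyticAt.contDiffAt hg.analyticAt.contDiffAt]
  exact Finset.sum_nonneg fun i _ =>
    mul_nonneg (mul_nonneg (Nat.cast_nonneg _) (hf.nonneg i)) (hg.nonneg _)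

theorem const_mul {c : ℝ} (hc : 0 ≤ c) (hf : NonnegTaylor f) : NonnegTaylor fun x => c * f x :=
  (const hc).mul hf

theorem pow (hf : NonnegTaylor f) (k : ℕ) : NonnegTaylor fun x => f x ^ k := by
  induction k with
  | zero => simpa using const zero_le_one
  | succ k ih => simpa only [pow_succ] using ih.mul hf

theorem deriv (hf : NonnegTaylor f) : NonnegTaylor (deriv f) :=
  ⟨hf.analyticAt.deriv, fun n => by rw [← iteratedDeriv_succ']; exact hf.nonneg _⟩

theorem of_hasSum {c : ℕ → ℝ} (hc : ∀ n, 0 ≤ c n)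
    (h : ∀ᶠ u in 𝓝 0, HasSum (fun n => (c n : ℂ) * u ^ n) (f u)) : NonnegTaylor f := by
  refine ⟨(hasFPowerSeriesAt_zero_of_eventually_hasSum h).analyticAt, fun n => ?_⟩
  rw [iteratedDeriv_zero_of_eventually_hasSum h]
  exact mul_nonneg (Nat.cast_nonneg _) (Complex.zero_le_real.2 (hc n))

theorem inv_sub_mul {b k : ℝ} (hb : 0 < b) (hk : 0 ≤ k) :
    NonnegTaylor fun x => ((b : ℂ) - k * x)⁻¹ := by
  refine of_hasSum (c := fun n => b⁻¹ * (k / b) ^ n) (fun n => by positivity) ?_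
  have hcont : ContinuousAt (fun x : ℂ => ‖(k / b : ℂ) * x‖) 0 := by fun_prop
  filter_upwards [hcont.eventually_lt_const (by simp : ‖(k / b : ℂ) * 0‖ < 1)] with x hx
  have hb' : (b : ℂ) ≠ 0 := Complex.ofReal_ne_zero.2 hb.ne'
  convert! (hasSum_geometric_of_norm_lt_one hx).mul_left (b : ℂ)⁻¹ using 1
  · ext n
    push_cast
    ring
  · rw [← mul_inv]
    congr 1
    field_simp

/-- If `F ∘ φ` has nonnegative Taylor coefficients, then so does `F`, provided that `1 / φ'` has
nonnegative Taylor coefficients. -/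
theorem of_comp {φ F m : ℂ → ℂ} (hφ : AnalyticAt ℂ φ 0) (hφ0 : φ 0 = 0)
    (hφ' : NonnegTaylor fun x => (_root_.deriv φ x)⁻¹) (hφ1 : _root_.deriv φ 0 ≠ 0)
    (hF : AnalyticAt ℂ F 0) (hm : NonnegTaylor m) (h : ∀ᶠ x in 𝓝 0, F (φ x) = m x) :
    NonnegTaylor F := by
  refine ⟨hF, fun n => ?_⟩
  induction n generalizing F m with
  | zero => simpa [← h.self_of_nhds, hφ0] using hm.nonneg 0
  | succ n ih =>
    rw [iteratedDeriv_succ']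
    refine ih hF.deriv (hm.deriv.mul hφ') (eventually_deriv_comp_eq hF hφ hφ0 hφ1 h ?_)
    filter_upwards [hφ.deriv.continuousAt.eventually_ne hφ1] with x hx1
    exact (inv_mul_cancel_right₀ hx1 _).symm

end NonnegTaylor

section AbsolutelySummable

variable {f : ℂ → ℂ}

theorem iteratedDeriv_inv_one_sub_zero (n : ℕ) :
    iteratedDeriv n (fun x : ℂ => (1 - x)⁻¹) 0 = n.factorial := by
  have h : ∀ᶠ x : ℂ in 𝓝 0, HasSum (fun n => 1 * x ^ n) (1 - x)⁻¹ := by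
    filter_upwards [Metric.ball_mem_nhds (0 : ℂ) one_pos] with x hx
    simpa using hasSum_geometric_of_norm_lt_one (mem_ball_zero_iff.1 hx)
  simpa using iteratedDeriv_zero_of_eventually_hasSum h n

theorem iteratedDeriv_mul_inv_one_sub_zero (hf : AnalyticAt ℂ f 0) (n : ℕ) :
    iteratedDeriv n (fun x => f x * (1 - x)⁻¹) 0
      = n.factorial * ∑ i ∈ Finset.range (n + 1), (i.factorial : ℂ)⁻¹ * iteratedDeriv i f 0 := by
  have hinv : AnalyticAt ℂ (fun x : ℂ => (1 - x)⁻¹) 0 :=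
    (analyticAt_const.sub analyticAt_id).inv (by simp)
  rw [iteratedDeriv_fun_mul hf.contDiffAt hinv.contDiffAt, Finset.mul_sum]
  refine Finset.sum_congr rfl fun i hi => ?_
  have hchoose : (n.choose i * i.factorial * (n - i).factorial : ℂ) = n.factorial := by
    exact_mod_cast Nat.choose_mul_factorial_mul_factorial (Finset.mem_range_succ_iff.1 hi)
  rw [iteratedDeriv_inv_one_sub_zero, ← hchoose]
  field_simp

theorem deriv_conj_eq_conj_deriv (h : ∀ x, f (conj x) = conj (f x)) (x : ℂ) :
    deriv f (conj x) = conj (deriv f x) := by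
  have hf : conj ∘ f ∘ conj = f := by
    ext x
    simp only [Function.comp_apply, h, Complex.conj_conj]
  conv_lhs => rw [← hf, deriv_conj_conj]
  simp only [Function.comp_apply, Complex.conj_conj]

theorem conj_iteratedDeriv_zero (h : ∀ x, f (conj x) = conj (f x)) (n : ℕ) :
    conj (iteratedDeriv n f 0) = iteratedDeriv n f 0 := by
  induction n generalizing f with
  | zero => simp [← h]
  | succ n ih =>
    rw [iteratedDeriv_succ']
    exact ih (deriv_conj_eq_conj_deriv h)

theorem summable_norm_taylor_of_differentiableOn_ball {R : ℝ} (hR : 1 < R)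
    (hf : DifferentiableOn ℂ f (Metric.ball 0 R)) :
    Summable fun n : ℕ => ‖(n.factorial : ℂ)⁻¹ * iteratedDeriv n f 0‖ := by
  have h := Complex.hasSum_taylorSeries_on_ball hf (z := 1) (by simpa using hR)
  simpa using h.summable.norm

theorem exists_nonnegTaylor_sub_mul_inv_one_sub {R : ℝ} (hR : 1 < R)
    (hf : DifferentiableOn ℂ f (Metric.ball 0 R)) (hconj : ∀ x, f (conj x) = conj (f x)) :
    ∃ C : ℝ, 0 < C ∧ NonnegTaylor fun x => (C - f x) * (1 - x)⁻¹ := by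
  set c : ℕ → ℂ := fun n => (n.factorial : ℂ)⁻¹ * iteratedDeriv n f 0
  have hsum : Summable fun n => ‖c n‖ := summable_norm_taylor_of_differentiableOn_ball hR hf
  have hre (n : ℕ) : ((c n).re : ℂ) = c n :=
    Complex.conj_eq_iff_re.1 (by simp [c, conj_iteratedDeriv_zero hconj])
  have hfan : AnalyticAt ℂ f 0 :=
    hf.analyticAt (Metric.ball_mem_nhds 0 (one_pos.trans hR))
  have hinv : AnalyticAt ℂ (fun x : ℂ => (1 - x)⁻¹) 0 :=
    (analyticAt_const.sub analyticAt_id).inv (by simp)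
  set C : ℝ := (∑' n, ‖c n‖) + 1
  have hC (n : ℕ) : ∑ i ∈ Finset.range (n + 1), (c i).re ≤ C :=
    calc ∑ i ∈ Finset.range (n + 1), (c i).re ≤ ∑ i ∈ Finset.range (n + 1), ‖c i‖ :=
          Finset.sum_le_sum fun i _ => Complex.re_le_norm _
      _ ≤ ∑' n, ‖c n‖ := hsum.sum_le_tsum _ fun _ _ => norm_nonneg _
      _ ≤ C := le_add_of_nonneg_right zero_le_one
  refine ⟨C, by positivity, (analyticAt_const.sub hfan).mul hinv, fun n => ?_⟩
  have hderiv : iteratedDeriv n (fun x => (C - f x) * (1 - x)⁻¹) 0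
      = n.factorial * (C - ∑ i ∈ Finset.range (n + 1), c i) := by
    simp_rw [sub_mul]
    rw [iteratedDeriv_fun_sub (analyticAt_const.fun_mul hinv).contDiffAt
      (hfan.fun_mul hinv).contDiffAt, iteratedDeriv_const_mul_field,
      iteratedDeriv_inv_one_sub_zero, iteratedDeriv_mul_inv_one_sub_zero hfan]
    ring
  rw [hderiv, ← Finset.sum_congr rfl fun i _ => hre i]
  exact mul_nonneg (Nat.cast_nonneg _) (by exact_mod_cast sub_nonneg.2 (hC n))

end AbsolutelySummable

section Constants

theorem nuc_pos : 0 < nuc := by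
  unfold nuc
  positivity

theorem tc_pos : 0 < tc := by
  unfold tc
  positivity

theorem uc_pos : 0 < uc := by
  have := tc_pos
  unfold uc
  positivity

theorem nuc_sq_sub_one_mul_tc : (nuc ^ 2 - 1) * tc = 10 / 3 * uc := by
  have h7 : √7 ^ 2 = 7 := Real.sq_sqrt (by norm_num)
  unfold nuc uc
  linear_combination 4 * tc * h7

theorem nuc_sq_sub_one_mul_uc_sq : (nuc ^ 2 - 1) * uc ^ 2 = 9 / 10 := by
  have h7 : √7 ^ 2 = 7 := Real.sq_sqrt (by norm_num)
  have h10 : √10 ^ 2 = 10 := Real.sq_sqrt (by norm_num)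
  have hrpow : ((7 + √7) ^ ((3 : ℝ) / 2)) ^ 2 = (7 + √7) ^ 3 := by
    rw [← Real.rpow_natCast, ← Real.rpow_mul (by positivity), ← Real.rpow_natCast]
    norm_num
  have hnuc : nuc ^ 2 - 1 = 4 * (7 + √7) := by
    unfold nuc
    linear_combination 4 * h7
  rw [hnuc, uc, tc, mul_pow, div_pow, mul_pow 8, h10, hrpow]
  field_simp
  norm_num

end Constants

section Parametrization

theorem uhat_zero : uhat 0 = 0 := by
  simp [uhat]

theorem analyticAt_uhat (x : ℂ) : AnalyticAt ℂ uhat x := by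
  unfold uhat
  fun_prop

theorem deriv_uhat (x : ℂ) : deriv uhat x = 2 / 3 * uc * (1 - x) ^ 2 * (5 - 2 * x) := by
  unfold uhat
  simp (disch := fun_prop) only [deriv_fun_mul, deriv_fun_sub, deriv_fun_add, deriv_fun_pow,
    deriv_const_mul_id', deriv_const', deriv_id'', Nat.cast_ofNat]
  ring

theorem deriv_uhat_zero_ne_zero : deriv uhat 0 ≠ 0 := by
  simp [deriv_uhat, uc_pos.ne']

/-- The parametrization of `u² ∑ₚ z_{p,1} uᵖ`, as obtained from the coefficient of `v` in the
equation satisfied by `Z(u, v)`. -/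
noncomputable def Ghat (H : ℂ) : ℂ :=
  nuc * uhat H * (Z0hat H - 1) - (nuc ^ 2 - 1) * tc * Z0hat H * (Z0hat H - 1)
    + (nuc ^ 2 - 1) * tc * uhat H * Z1hat 0 - (nuc ^ 2 - 1) * uhat H ^ 3

theorem Ghat_eq (x : ℂ) :
    Ghat x = uhat x * ((3 / 10 * √7 - 33 / 50) * (x * (10 - 12 * x + 6 * x ^ 2 - x ^ 3) / 3)
      + x ^ 2 * (23 - 39 * x + 24 * x ^ 2 - 5 * x ^ 3) / 50) := by
  have hs : ((√7 : ℝ) : ℂ) ^ 2 = 7 := by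
    exact_mod_cast Real.sq_sqrt (by norm_num : (0 : ℝ) ≤ 7)
  have huc : (uc : ℂ) ≠ 0 := by exact_mod_cast uc_pos.ne'
  have htc := congrArg Complex.ofReal nuc_sq_sub_one_mul_tc
  have hsq := congrArg Complex.ofReal nuc_sq_sub_one_mul_uc_sq
  push_cast at htc hsq
  have hz1 : (uc : ℂ) * Z1hat 0 = 3 / 10 * (√7 - 11 / 5) := by
    simp only [Z1hat]
    field_simp
    ring
  have hnuc : (nuc : ℂ) = 1 + 2 * √7 := by
    simp [nuc]
  have hu : uhat x = uc * (x * (10 - 12 * x + 6 * x ^ 2 - x ^ 3) / 3) := by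
    rw [uhat]
    ring
  set P := 10 - 12 * x + 6 * x ^ 2 - x ^ 3
  have hz0 : Z0hat x = (1 - (1 - √7) * x + 3 * x ^ 2 - x ^ 3) * P / 10 := by
    rw [Z0hat]
    ring
  rw [Ghat, hu, hz0]
  set Z := (1 - (1 - √7) * x + 3 * x ^ 2 - x ^ 3) * P / 10
  set W := x * P / 3
  linear_combination uc * W * (Z - 1) * hnuc + (uc * W * Z1hat 0 - Z * (Z - 1)) * htc
    + 10 / 3 * uc * W * hz1 - uc * W ^ 3 * hsq + uc * x ^ 2 * P ^ 2 / 30 * hs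

end Parametrization

section KernelEquation

/-- The numbers `z p q` are the Taylor coefficients at `(0, 0)` of the function `Z(u, v)`
determined by the kernel equation, written in the coordinates `u = û(H)`, `v = û(K)`. -/
def SolvesKernelEquation (z : ℕ → ℕ → ℝ) (ρ : ℝ) : Prop :=
  ∀ H K : ℂ, ‖H‖ < ρ → ‖K‖ < ρ → ∃ ZHK : ℂ,
    HasSum (fun pq : ℕ × ℕ => (z pq.1 pq.2 : ℂ) * uhat H ^ pq.1 * uhat K ^ pq.2) ZHK ∧
    ((nuc : ℂ) * uhat K * uhat H - uhat H ^ 2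
        - ((nuc : ℂ) ^ 2 - 1) * (tc : ℂ) * uhat K * (Z0hat H + uhat H * Z1hat K))
        * (ZHK - Z0hat K)
      = uhat H ^ 2 * (Z0hat K - Z0hat H)
        + ((nuc : ℂ) ^ 2 - 1) * uhat H * uhat K * (uhat H ^ 2 - (tc : ℂ) * Z0hat H * Z1hat K)

/-- The coefficient of `Z(u, v)` in the kernel equation at `u = û(H)`, `v = û(K)`. -/
noncomputable def kernelDen (H K : ℂ) : ℂ :=
  nuc * uhat K * uhat H - uhat H ^ 2
    - (nuc ^ 2 - 1) * tc * uhat K * (Z0hat H + uhat H * Z1hat K)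

/-- The kernel equation is equivalent to
`kernelDen H K * (Z(û(H), û(K)) - Ẑ₀(H)) = û(K) * kernelNum H K`. -/
noncomputable def kernelNum (H K : ℂ) : ℂ :=
  (nuc * uhat H - (nuc ^ 2 - 1) * tc * (Z0hat H + uhat H * Z1hat K)) * (Z0hat K - Z0hat H)
    + (nuc ^ 2 - 1) * uhat H * (uhat H ^ 2 - tc * Z0hat H * Z1hat K)

theorem Z0hat_zero : Z0hat 0 = 1 := by
  simp [Z0hat]

theorem differentiableAt_Z0hat (x : ℂ) : DifferentiableAt ℂ Z0hat x := by
  unfold Z0hat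
  fun_prop

theorem differentiableAt_Z1hat_zero : DifferentiableAt ℂ Z1hat 0 := by
  unfold Z1hat
  fun_prop (disch := simp)

theorem differentiableAt_kernelDen_zero (H : ℂ) : DifferentiableAt ℂ (kernelDen H) 0 := by
  have := differentiableAt_Z1hat_zero
  have := (analyticAt_uhat 0).differentiableAt
  unfold kernelDen
  fun_prop

theorem differentiableAt_kernelNum_zero (H : ℂ) : DifferentiableAt ℂ (kernelNum H) 0 := by
  have := differentiableAt_Z1hat_zero
  have := differentiableAt_Z0hat 0
  unfold kernelNum
  fun_prop

theorem kernelDen_zero (H : ℂ) : kernelDen H 0 = -uhat H ^ 2 := by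
  simp [kernelDen, uhat_zero]

theorem kernelNum_zero (H : ℂ) : kernelNum H 0 = -Ghat H := by
  rw [kernelNum, Ghat, Z0hat_zero]
  ring

variable {z : ℕ → ℕ → ℝ} {ρ : ℝ}

theorem eventually_norm_lt (hρ : 0 < ρ) : ∀ᶠ x : ℂ in 𝓝 0, ‖x‖ < ρ := by
  filter_upwards [Metric.ball_mem_nhds (0 : ℂ) hρ] with x hx using mem_ball_zero_iff.1 hx

theorem SolvesKernelEquation.hasSum_add_mul (hZ : SolvesKernelEquation z ρ) {H K : ℂ}
    (hH : ‖H‖ < ρ) (hK : ‖K‖ < ρ) (hden : kernelDen H K ≠ 0) :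
    HasSum (fun pq : ℕ × ℕ => (z pq.1 pq.2 : ℂ) * uhat H ^ pq.1 * uhat K ^ pq.2)
      (Z0hat H + uhat K * (kernelNum H K / kernelDen H K)) := by
  obtain ⟨ZHK, hsum, heq⟩ := hZ H K hH hK
  convert! hsum using 1
  rw [← mul_div_assoc, ← eq_sub_iff_add_eq', div_eq_iff hden, kernelNum, kernelDen]
  linear_combination -heq

theorem SolvesKernelEquation.summable_left (hZ : SolvesKernelEquation z ρ) (hρ : 0 < ρ) {H : ℂ}
    (hH : ‖H‖ < ρ) (q : ℕ) : Summable fun p => (z p q : ℂ) * uhat H ^ p := by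
  obtain ⟨K, hK, hK0⟩ := exists_ne_zero_of_deriv_ne_zero deriv_uhat_zero_ne_zero
    (eventually_norm_lt hρ)
  obtain ⟨_, hsum, -⟩ := hZ H K hH hK
  exact summable_left_of_summable_prod_mul_pow (w := fun p q => (z p q : ℂ) * uhat H ^ p) hK0
    hsum.summable q

theorem SolvesKernelEquation.uhat_sq_mul_tsum (hZ : SolvesKernelEquation z ρ) (hρ : 0 < ρ) {H : ℂ}
    (hH : ‖H‖ < ρ) : uhat H ^ 2 * ∑' p, (z p 1 : ℂ) * uhat H ^ p = Ghat H := by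
  rcases eq_or_ne (uhat H) 0 with hu | hu
  · simp [Ghat_eq, hu]
  · have hden : kernelDen H 0 ≠ 0 := by simpa [kernelDen_zero] using hu
    have hcoeff := coeff_one_eq_of_hasSum_add_mul
      (c := fun q => ∑' p, (z p q : ℂ) * uhat H ^ p) (b := Z0hat H)
      (analyticAt_uhat 0) uhat_zero deriv_uhat_zero_ne_zero
      ((differentiableAt_kernelNum_zero H).fun_div (differentiableAt_kernelDen_zero H) hden) ?_
    · rw [hcoeff, kernelNum_zero, kernelDen_zero]
      field_simp
    · filter_upwards [eventually_norm_lt hρ,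
        (differentiableAt_kernelDen_zero H).continuousAt.eventually_ne hden] with K hK hKden
      exact hasSum_tsum_left_mul_pow (w := fun p q => (z p q : ℂ) * uhat H ^ p)
        (hZ.summable_left hρ hH) (hZ.hasSum_add_mul hH hK hKden)

theorem SolvesKernelEquation.exists_eventually_hasSum (hZ : SolvesKernelEquation z ρ)
    (hρ : 0 < ρ) : ∃ W : ℂ → ℂ, (∀ᶠ u in 𝓝 0, HasSum (fun p => (z p 1 : ℂ) * u ^ p) (W u)) ∧
      ∀ᶠ x in 𝓝 0, uhat x * (uhat x * W (uhat x)) = Ghat x := by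
  obtain ⟨H, hH, hne⟩ := exists_ne_zero_of_deriv_ne_zero deriv_uhat_zero_ne_zero
    (eventually_norm_lt hρ)
  refine ⟨_, eventually_hasSum_tsum_of_summable hne (hZ.summable_left hρ hH 1), ?_⟩
  filter_upwards [eventually_norm_lt hρ] with x hx
  rw [← hZ.uhat_sq_mul_tsum hρ hx]
  ring

end KernelEquation

section KeyEstimate

/-- The parametrization of the derivative of `u² ∑ₚ z_{p,1} uᵖ` with respect to `u`. -/
noncomputable def dGhat (x : ℂ) : ℂ :=
  (3 / 5 * √7 - 33 / 25) * (x * (10 - 12 * x + 6 * x ^ 2 - x ^ 3) / 3)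
    + (99 / 256 + 99 / 640 * x + 2307 / 1600 * x ^ 2 - 1593 / 800 * x ^ 3 + 459 / 400 * x ^ 4
      - 9 / 40 * x ^ 5) - 495 / 256 * (5 - 2 * x)⁻¹

/-- The second derivative of `u² ∑ₚ z_{p,1} uᵖ` with respect to `u`, multiplied by `u_c`, exceeds
`(1 - H)⁻² (5 - 2 H)⁻¹ / 50` by this function of `H`, whose Taylor coefficients are visibly
nonnegative. -/
noncomputable def ddGhatExcess (x : ℂ) : ℂ :=
  (3 / 5 * √7 - 199 / 150 : ℝ) + (611 / 750 : ℝ) * x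
    + (3 / 100 : ℝ) * (x ^ 2 * (1 - x)⁻¹ ^ 2) + (1 / 75 : ℝ) * (x ^ 3 * (1 - x)⁻¹ ^ 2)
    + (1 / 75 : ℝ) * ((1 - x)⁻¹ * (5 - 2 * x)⁻¹)
    + x ^ 2 * (1 - x)⁻¹ * ((99 / 160 : ℝ) * (5 - 2 * x)⁻¹ ^ 3
      + (363 / 800 : ℝ) * (5 - 2 * x)⁻¹ ^ 2 + (997 / 2000 : ℝ) * (5 - 2 * x)⁻¹
      + (63 / 2000 : ℝ) * (x * (5 - 2 * x)⁻¹))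

theorem nonnegTaylor_inv_one_sub : NonnegTaylor fun x => (1 - x)⁻¹ := by
  simpa using NonnegTaylor.inv_sub_mul one_pos zero_le_one

theorem nonnegTaylor_inv_five_sub : NonnegTaylor fun x => (5 - 2 * x)⁻¹ := by
  simpa using NonnegTaylor.inv_sub_mul (b := 5) (k := 2) (by norm_num) (by norm_num)

theorem nonnegTaylor_ddGhatExcess : NonnegTaylor ddGhatExcess := by
  have hS := nonnegTaylor_inv_one_sub
  have hk := nonnegTaylor_inv_five_sub
  have hx := NonnegTaylor.id
  have h7 : (199 / 90 : ℝ) ≤ √7 := Real.le_sqrt_of_sq_le (by norm_num)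
  have hquad := ((((hk.pow 3).const_mul (c := 99 / 160) (by norm_num)).add
    ((hk.pow 2).const_mul (c := 363 / 800) (by norm_num))).add
    (hk.const_mul (c := 997 / 2000) (by norm_num))).add
    ((hx.mul hk).const_mul (c := 63 / 2000) (by norm_num))
  exact (((((NonnegTaylor.const (c := 3 / 5 * √7 - 199 / 150) (by linarith)).add
    (hx.const_mul (c := 611 / 750) (by norm_num))).add
    (((hx.pow 2).mul (hS.pow 2)).const_mul (c := 3 / 100) (by norm_num))).add
    (((hx.pow 3).mul (hS.pow 2)).const_mul (c := 1 / 75) (by norm_num))).add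
    ((hS.mul hk).const_mul (c := 1 / 75) (by norm_num))).add (((hx.pow 2).mul hS).mul hquad)

theorem nonnegTaylor_inv_deriv_uhat : NonnegTaylor fun x => (deriv uhat x)⁻¹ := by
  have := uc_pos
  have h := ((nonnegTaylor_inv_one_sub.pow 2).mul nonnegTaylor_inv_five_sub).const_mul
    (c := (2 / 3 * uc)⁻¹) (by positivity)
  convert! h using 2 with x
  rw [deriv_uhat]
  push_cast
  simp only [mul_inv, inv_pow, mul_assoc]

variable {x : ℂ}

theorem deriv_Ghat (hx : 5 - 2 * x ≠ 0) : deriv Ghat x = dGhat x * deriv uhat x := by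
  have hu := (analyticAt_uhat x).differentiableAt
  rw [funext Ghat_eq]
  simp (disch := fun_prop) only [deriv_fun_mul, deriv_fun_sub, deriv_fun_add, deriv_fun_pow,
    deriv_const_mul_id', deriv_const', deriv_id'', deriv_div_const, Nat.cast_ofNat]
  rw [deriv_uhat, uhat, dGhat]
  field_simp
  ring

theorem deriv_dGhat (hx1 : 1 - x ≠ 0) (hx : 5 - 2 * x ≠ 0) :
    deriv dGhat x
      = ((1 - x)⁻¹ ^ 2 * (5 - 2 * x)⁻¹ / 50 + ddGhatExcess x) / uc * deriv uhat x := by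
  have huc : (uc : ℂ) ≠ 0 := Complex.ofReal_ne_zero.2 uc_pos.ne'
  unfold dGhat
  simp (disch := first | assumption | fun_prop (disch := assumption)) only [deriv_fun_mul,
    deriv_fun_sub, deriv_fun_add, deriv_fun_pow, deriv_fun_inv'', deriv_const_mul_id,
    deriv_const', deriv_id'', deriv_div_const, Nat.cast_ofNat]
  rw [deriv_uhat, ddGhatExcess]
  push_cast
  -- `field_simp` clears the powers of `5 - 2 * x` only once it is an atom `y`.
  obtain ⟨y, hy⟩ : ∃ y, y = 5 - 2 * x := ⟨_, rfl⟩
  obtain rfl : x = (5 - y) / 2 := by rw [hy]; ring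
  have hone : 1 - (5 - y) / 2 = (y - 3) / 2 := by ring
  have hthree : y - 3 ≠ 0 := by simpa [hone] using hx1
  rw [← hy] at hx ⊢
  rw [hone]
  field_simp
  ring

theorem eventually_deriv_deriv_comp_uhat {G : ℂ → ℂ} (hG : AnalyticAt ℂ G 0)
    (h : ∀ᶠ x in 𝓝 0, G (uhat x) = Ghat x) : ∀ᶠ x in 𝓝 0, deriv (deriv G) (uhat x)
      = ((1 - x)⁻¹ ^ 2 * (5 - 2 * x)⁻¹ / 50 + ddGhatExcess x) / uc := by
  have hone : ∀ᶠ x : ℂ in 𝓝 0, 1 - x ≠ 0 :=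
    (continuousAt_const.sub continuousAt_id).eventually_ne (by simp)
  have hfive : ∀ᶠ x : ℂ in 𝓝 0, 5 - 2 * x ≠ 0 :=
    (continuousAt_const.sub (continuousAt_const.mul continuousAt_id)).eventually_ne (by simp)
  have hu := analyticAt_uhat 0
  have hderiv : ∀ᶠ x in 𝓝 0, deriv G (uhat x) = dGhat x :=
    eventually_deriv_comp_eq hG hu uhat_zero deriv_uhat_zero_ne_zero h
      (hfive.mono fun x => deriv_Ghat)
  refine eventually_deriv_comp_eq hG.deriv hu uhat_zero deriv_uhat_zero_ne_zero hderiv ?_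
  filter_upwards [hone, hfive] with x using deriv_dGhat

theorem three_sub_three_mul_add_sq_ne_zero (hx : ‖x‖ < 3 / 2) : 3 - 3 * x + x ^ 2 ≠ 0 := by
  intro h
  have hre := congrArg Complex.re h
  have him := congrArg Complex.im h
  have hlt : x.re < 3 / 2 := (Complex.re_le_norm x).trans_lt hx
  simp only [pow_two, Complex.add_re, Complex.sub_re, Complex.re_ofNat, Complex.mul_re,
    Complex.im_ofNat, zero_mul, sub_zero, Complex.zero_re, Complex.add_im, Complex.sub_im,
    Complex.mul_im, add_zero, zero_sub, Complex.zero_im] at hre him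
  have hprod : x.im * (2 * x.re - 3) = 0 := by linear_combination him
  have him0 : x.im = 0 := (mul_eq_zero.1 hprod).resolve_right (by linarith)
  rw [him0] at hre
  nlinarith [sq_nonneg (x.re - 3 / 2)]

theorem differentiableOn_deriv_uhat_mul_Ahat :
    DifferentiableOn ℂ (deriv fun x => uhat x * Ahat x) (Metric.ball 0 (3 / 2)) := by
  refine DifferentiableOn.deriv (fun x hx => ?_) Metric.isOpen_ball
  have hden : (3 - 3 * x + x ^ 2) ^ 2 ≠ 0 :=
    pow_ne_zero 2 (three_sub_three_mul_add_sq_ne_zero (mem_ball_zero_iff.1 hx))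
  have := (analyticAt_uhat x).differentiableAt
  refine DifferentiableAt.differentiableWithinAt ?_
  unfold Ahat
  fun_prop (disch := assumption)

theorem uhat_mul_Ahat_conj (x : ℂ) :
    uhat (conj x) * Ahat (conj x) = conj (uhat x * Ahat x) := by
  simp only [uhat, Ahat, map_mul, map_div₀, map_add, map_sub, map_pow, map_one, map_ofNat,
    Complex.conj_ofReal]

theorem exists_nonnegTaylor_deriv_deriv_sub {G B : ℂ → ℂ} (hG : AnalyticAt ℂ G 0)
    (hB : AnalyticAt ℂ B 0) (hGu : ∀ᶠ x in 𝓝 0, G (uhat x) = Ghat x)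
    (hBu : ∀ᶠ x in 𝓝 0, B (uhat x) = uhat x * Ahat x) :
    ∃ c : ℝ, 0 < c ∧ NonnegTaylor fun u => deriv (deriv G) u - c * deriv B u := by
  obtain ⟨C, hC, hCf⟩ := exists_nonnegTaylor_sub_mul_inv_one_sub (by norm_num)
    differentiableOn_deriv_uhat_mul_Ahat (deriv_conj_eq_conj_deriv uhat_mul_Ahat_conj)
  have huc := uc_pos
  have hcomp := (nonnegTaylor_ddGhatExcess.add ((hCf.mul (nonnegTaylor_inv_one_sub.mul
    nonnegTaylor_inv_five_sub)).const_mul (c := (50 * C)⁻¹) (by positivity))).const_mul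
    (c := uc⁻¹) (by positivity)
  -- For `c = (75 C)⁻¹`, the function `G'' - c B'` is `hcomp` in the variable `x`: since
  -- `1 / û'` is a multiple of `(1 - x)⁻² (5 - 2 x)⁻¹`, it absorbs the singular part of `G''`.
  refine ⟨(75 * C)⁻¹, by positivity, .of_comp (analyticAt_uhat 0) uhat_zero
    nonnegTaylor_inv_deriv_uhat deriv_uhat_zero_ne_zero
    (hG.deriv.deriv.fun_sub (analyticAt_const.fun_mul hB.deriv)) hcomp ?_⟩
  filter_upwards [eventually_deriv_deriv_comp_uhat hG hGu,
    eventually_deriv_comp_mul_deriv hB (analyticAt_uhat 0) uhat_zero hBu,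
    (analyticAt_uhat 0).deriv.continuousAt.eventually_ne deriv_uhat_zero_ne_zero] with x hGx hBx hx
  have hC' : (C : ℂ) ≠ 0 := Complex.ofReal_ne_zero.2 hC.ne'
  have huc' : (uc : ℂ) ≠ 0 := Complex.ofReal_ne_zero.2 huc.ne'
  rw [hGx, (eq_mul_inv_iff_mul_eq₀ hx).2 hBx, deriv_uhat]
  push_cast
  simp only [mul_inv, inv_pow]
  field_simp
  ring

theorem SolvesKernelEquation.exists_mul_le_add_two_mul {z : ℕ → ℕ → ℝ} {a : ℕ → ℝ} {ρ : ℝ}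
    (hZ : SolvesKernelEquation z ρ) (hρ : 0 < ρ)
    (ha : ∀ x : ℂ, ‖x‖ < ρ → HasSum (fun p => (a p : ℂ) * uhat x ^ p) (Ahat x)) :
    ∃ c : ℝ, 0 < c ∧ ∀ n : ℕ, c * a n ≤ (n + 2) * z n 1 := by
  obtain ⟨W, hW, hWu⟩ := hZ.exists_eventually_hasSum hρ
  obtain ⟨A, hA, hAu⟩ := exists_eventually_hasSum_of_comp deriv_uhat_zero_ne_zero
    ((eventually_norm_lt hρ).mono ha)
  have hWan := (hasFPowerSeriesAt_zero_of_eventually_hasSum hW).analyticAt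
  have hAan := (hasFPowerSeriesAt_zero_of_eventually_hasSum hA).analyticAt
  have hG : AnalyticAt ℂ (fun u => u * (u * W u)) 0 := by fun_prop
  have hB : AnalyticAt ℂ (fun u => u * A u) 0 := by fun_prop
  obtain ⟨c, hc, hE⟩ := exists_nonnegTaylor_deriv_deriv_sub hG hB hWu
    (hAu.mono fun x hx => congrArg (uhat x * ·) hx)
  refine ⟨c, hc, fun n => ?_⟩
  have hGn : iteratedDeriv n (deriv (deriv fun u => u * (u * W u))) 0
      = (n + 2) * ((n + 1) * (n.factorial * z n 1)) := by
    rw [← iteratedDeriv_succ', ← iteratedDeriv_succ', iteratedDeriv_succ_id_mul_zero (by fun_prop),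
      iteratedDeriv_succ_id_mul_zero hWan, iteratedDeriv_zero_of_eventually_hasSum hW]
    push_cast
    ring
  have hBn : iteratedDeriv n (deriv fun u => u * A u) 0 = (n + 1) * (n.factorial * a n) := by
    rw [← iteratedDeriv_succ', iteratedDeriv_succ_id_mul_zero hAan,
      iteratedDeriv_zero_of_eventually_hasSum hA]
  have hEn := hE.nonneg n
  rw [iteratedDeriv_fun_sub hG.deriv.deriv.contDiffAt
    (analyticAt_const.fun_mul hB.deriv).contDiffAt, iteratedDeriv_const_mul_field, hGn, hBn,
    sub_nonneg] at hEn
  have hle : c * ((n + 1) * (n.factorial * a n)) ≤ (n + 2) * ((n + 1) * (n.factorial * z n 1)) := by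
    exact_mod_cast hEn
  refine le_of_mul_le_mul_left ?_ (by positivity : (0 : ℝ) < (n + 1) * n.factorial)
  linear_combination hle

end KeyEstimate

section Chain

/-- The measure `μ` is the law of the trajectories, started from `p`, of the Markov chain with
transition probabilities `K`, as described by its values on cylinder sets. -/
def IsChainLaw (K : ℕ → ℕ → ℝ) (p : ℕ) (μ : MeasureTheory.Measure (ℕ → ℕ)) : Prop :=
  ∀ n : ℕ, ∀ s : ℕ → ℕ, μ {ω : ℕ → ℕ | ∀ i ≤ n, ω i = s i}
    = ENNReal.ofReal ((if s 0 = p then 1 else 0)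
        * ∏ i ∈ Finset.range n, K (s i) (s (i + 1)))

/-- The trajectories that avoid `0` up to time `n`. -/
def aliveUpTo (n : ℕ) : Set (ℕ → ℕ) := {ω | ∀ i ≤ n, ω i ≠ 0}

variable {K : ℕ → ℕ → ℝ} {p d : ℕ} {c : ℝ} {μ : MeasureTheory.Measure (ℕ → ℕ)}

theorem IsChainLaw.measure_cylinder_inter (h : IsChainLaw K p μ) {n q : ℕ} {s : ℕ → ℕ}
    (hK : 0 ≤ K (s n) q) :
    μ ({ω | ∀ i ≤ n, ω i = s i} ∩ {ω | ω (n + 1) = q})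
      = ENNReal.ofReal (K (s n) q) * μ {ω | ∀ i ≤ n, ω i = s i} := by
  have hupdate (i : ℕ) (hi : i ≤ n) : Function.update s (n + 1) q i = s i :=
    Function.update_of_ne (by omega) _ _
  have hinter : {ω : ℕ → ℕ | ∀ i ≤ n, ω i = s i} ∩ {ω | ω (n + 1) = q}
      = {ω | ∀ i ≤ n + 1, ω i = Function.update s (n + 1) q i} := by
    ext ω
    simp +contextual [Nat.le_add_one_iff, or_imp, forall_and, hupdate]
  rw [hinter, h, h, Finset.prod_range_succ, ← mul_assoc, mul_comm (ENNReal.ofReal _),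
    ← ENNReal.ofReal_mul' hK, Function.update_self, hupdate n le_rfl, hupdate 0 n.zero_le]
  congr 3
  refine Finset.prod_congr rfl fun i hi => ?_
  have := Finset.mem_range.1 hi
  rw [hupdate i (by omega), hupdate (i + 1) (by omega)]

theorem IsChainLaw.le_add_of_measure_cylinder_ne_zero (h : IsChainLaw K p μ)
    (hd : ∀ p q, p + d < q → K p q = 0) {n : ℕ} {s : ℕ → ℕ}
    (hs : μ {ω | ∀ i ≤ n, ω i = s i} ≠ 0) : s n ≤ p + d * n := by
  have hne : (if s 0 = p then 1 else 0) * ∏ i ∈ Finset.range n, K (s i) (s (i + 1)) ≠ 0 := by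
    intro h0
    exact hs (by rw [h, h0, ENNReal.ofReal_zero])
  have h0 : s 0 = p := by
    by_contra h0
    simp [h0] at hne
  have hstep (i : ℕ) (hi : i < n) : s (i + 1) ≤ s i + d := by
    by_contra! hlt
    exact Finset.prod_ne_zero_iff.1 (right_ne_zero_of_mul hne) i (Finset.mem_range.2 hi)
      (hd _ _ hlt)
  clear hs hne
  induction n with
  | zero => omega
  | succ n ih =>
    have := hstep n n.lt_succ_self
    have := ih fun i hi => hstep i (by omega)
    linarith

theorem mul_measure_le_measure_inter_of_forall_cylinder {n : ℕ} {E B : Set (ℕ → ℕ)}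
    {κ : ENNReal} (hE : DependsOn (· ∈ E) (Set.Iic n))
    (h : ∀ s ∈ E, κ * μ {ω | ∀ i ≤ n, ω i = s i} ≤ μ ({ω | ∀ i ≤ n, ω i = s i} ∩ B)) :
    κ * μ E ≤ μ (E ∩ B) := by
  set X := Preorder.frestrictLe (π := fun _ : ℕ => ℕ) n
  have hX (S) : MeasurableSet (X ⁻¹' S) :=
    Preorder.measurable_frestrictLe n MeasurableSet.of_discrete
  have hcyl (s : ℕ → ℕ) : X ⁻¹' {X s} = {ω | ∀ i ≤ n, ω i = s i} := by
    ext ω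
    simp [X, funext_iff]
  have hEX : X ⁻¹' (X '' E) = E := by
    refine (Set.subset_preimage_image X E).antisymm' fun ω hω => ?_
    obtain ⟨s, hs, hsω⟩ := hω
    exact (hE fun i hi => congrFun hsω ⟨i, Finset.mem_Iic.2 hi⟩).mp hs
  rw [← hEX, ← MeasureTheory.Measure.restrict_apply (hX _),
    ← MeasureTheory.tsum_measure_preimage_singleton (Set.to_countable _) fun _ _ => hX _,
    ← MeasureTheory.tsum_measure_preimage_singleton (Set.to_countable _) fun _ _ => hX _,
    ← ENNReal.tsum_mul_left]
  refine ENNReal.tsum_le_tsum ?_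
  rintro ⟨_, s, hs, rfl⟩
  rw [MeasureTheory.Measure.restrict_apply (hX _), hcyl]
  exact h s hs

theorem dependsOn_mem_aliveUpTo (n : ℕ) : DependsOn (· ∈ aliveUpTo n) (Set.Iic n) := by
  intro ω ω' h
  simp only [aliveUpTo, Set.mem_ofPred_eq, eq_iff_iff]
  exact forall₂_congr fun i hi => by rw [h i hi]

theorem IsChainLaw.measureReal_aliveUpTo_succ_le [MeasureTheory.IsFiniteMeasure μ]
    (h : IsChainLaw K p μ) (hd : ∀ p q, p + d < q → K p q = 0) (hc : 0 ≤ c)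
    (hK : ∀ q : ℕ, 1 ≤ q → c / q ≤ K q 0) (n : ℕ) :
    μ.real (aliveUpTo (n + 1)) ≤ (1 - c / (p + d * n)) * μ.real (aliveUpTo n) := by
  set B : Set (ℕ → ℕ) := {ω | ω (n + 1) = 0}
  have hB : MeasurableSet B := measurable_pi_apply (n + 1) (MeasurableSet.singleton 0)
  have hkill : ENNReal.ofReal (c / (p + d * n)) * μ (aliveUpTo n) ≤ μ (aliveUpTo n ∩ B) := by
    refine mul_measure_le_measure_inter_of_forall_cylinder (dependsOn_mem_aliveUpTo n)
      fun s hs => ?_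
    have hsn : 1 ≤ s n := Nat.one_le_iff_ne_zero.2 (hs n le_rfl)
    have hnonneg : 0 ≤ K (s n) 0 := le_trans (by positivity) (hK _ hsn)
    rw [h.measure_cylinder_inter hnonneg]
    rcases eq_or_ne (μ {ω | ∀ i ≤ n, ω i = s i}) 0 with h0 | h0
    · simp [h0]
    · have hle : (s n : ℝ) ≤ p + d * n := by
        exact_mod_cast h.le_add_of_measure_cylinder_ne_zero hd h0
      gcongr
      exact le_trans (by gcongr) (hK _ hsn)
  have hkillReal : c / (p + d * n) * μ.real (aliveUpTo n) ≤ μ.real (aliveUpTo n ∩ B) := by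
    have hmono := ENNReal.toReal_mono (MeasureTheory.measure_ne_top _ _) hkill
    rwa [ENNReal.toReal_mul, ENNReal.toReal_ofReal (by positivity)] at hmono
  have hsub : aliveUpTo (n + 1) ⊆ aliveUpTo n \ B := fun ω hω =>
    ⟨fun i hi => hω i (by omega), hω (n + 1) le_rfl⟩
  have hmono : μ.real (aliveUpTo (n + 1)) ≤ μ.real (aliveUpTo n \ B) :=
    MeasureTheory.measureReal_mono hsub
  have hsplit := MeasureTheory.measureReal_inter_add_sdiff (μ := μ) (s := aliveUpTo n) hB
  linarith

theorem one_sub_div_le_rpow {c d x : ℝ} (hc : 0 ≤ c) (hd : 0 < d) (hx : 0 < x) :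
    1 - c / x ≤ (x / (x + d)) ^ (c / d) := by
  have hlog : -(d / x) ≤ Real.log (x / (x + d)) := by
    refine le_trans (le_of_eq ?_) (Real.one_sub_inv_le_log_of_pos (by positivity))
    field_simp
    ring
  calc 1 - c / x = -(d / x) * (c / d) + 1 := by
        field_simp
        ring
    _ ≤ Real.log (x / (x + d)) * (c / d) + 1 := by gcongr
    _ ≤ Real.exp (Real.log (x / (x + d)) * (c / d)) := Real.add_one_le_exp _
    _ = (x / (x + d)) ^ (c / d) := (Real.rpow_def_of_pos (by positivity) _).symm

theorem IsChainLaw.measureReal_aliveUpTo_le [MeasureTheory.IsProbabilityMeasure μ]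
    (h : IsChainLaw K p μ) (hd0 : 0 < d) (hd : ∀ p q, p + d < q → K p q = 0) (hc : 0 ≤ c)
    (hK : ∀ q : ℕ, 1 ≤ q → c / q ≤ K q 0) (hp : 0 < p) (n : ℕ) :
    μ.real (aliveUpTo n) ≤ (p / (p + d * n) : ℝ) ^ (c / d) := by
  have hp' : (0 : ℝ) < p := Nat.cast_pos.2 hp
  have hd' : (0 : ℝ) < d := Nat.cast_pos.2 hd0
  induction n with
  | zero => simp [hp'.ne']
  | succ n ih =>
    calc μ.real (aliveUpTo (n + 1))
        ≤ (1 - c / (p + d * n)) * μ.real (aliveUpTo n) :=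
          h.measureReal_aliveUpTo_succ_le hd hc hK n
      _ ≤ ((p + d * n) / (p + d * n + d) : ℝ) ^ (c / d) * (p / (p + d * n) : ℝ) ^ (c / d) := by
          gcongr
          exact one_sub_div_le_rpow hc hd' (by positivity)
      _ = (p / (p + d * (n + 1 : ℕ)) : ℝ) ^ (c / d) := by
          rw [← Real.mul_rpow (by positivity) (by positivity)]
          congr 1
          push_cast
          field_simp
          ring

theorem IsChainLaw.measure_survival_le [MeasureTheory.IsProbabilityMeasure μ]
    (h : IsChainLaw K p μ) (hd0 : 0 < d) (hd : ∀ p q, p + d < q → K p q = 0) (hc : 0 ≤ c)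
    (hK : ∀ q : ℕ, 1 ≤ q → c / q ≤ K q 0) (hp : 0 < p) {r : ℝ} (hr : 0 < r) :
    μ {ω : ℕ → ℕ | ∀ n : ℕ, (n : ℝ) ≤ r * p → ω n ≠ 0} ≤ ENNReal.ofReal (r ^ (-(c / d))) := by
  have hp' : (0 : ℝ) < p := Nat.cast_pos.2 hp
  have hd' : (1 : ℝ) ≤ d := Nat.one_le_cast.2 hd0
  set N := ⌊r * p⌋₊
  have hsub : {ω : ℕ → ℕ | ∀ n : ℕ, (n : ℝ) ≤ r * p → ω n ≠ 0} ⊆ aliveUpTo N :=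
    fun ω hω i hi => hω i ((Nat.le_floor_iff (by positivity)).1 hi)
  have hfloor : r * p ≤ p + d * N := by
    have hlt : r * p < N + 1 := Nat.lt_floor_add_one _
    have hp1 : (1 : ℝ) ≤ p := Nat.one_le_cast.2 hp
    nlinarith [N.cast_nonneg (α := ℝ)]
  rw [ENNReal.le_ofReal_iff_toReal_le (MeasureTheory.measure_ne_top _ _) (by positivity)]
  calc μ.real {ω : ℕ → ℕ | ∀ n : ℕ, (n : ℝ) ≤ r * p → ω n ≠ 0}
      ≤ μ.real (aliveUpTo N) := MeasureTheory.measureReal_mono hsub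
    _ ≤ (p / (p + d * N) : ℝ) ^ (c / d) := h.measureReal_aliveUpTo_le hd0 hd hc hK hp N
    _ ≤ (p / (r * p) : ℝ) ^ (c / d) := by gcongr
    _ = r ^ (-(c / d)) := by
        rw [div_mul_cancel_right₀ hp'.ne', Real.inv_rpow hr.le, Real.rpow_neg hr.le]

theorem measure_exists_eq_zero_of_survival_le [MeasureTheory.IsProbabilityMeasure μ] {γ x : ℝ}
    (hγ : 0 < γ) (h : ∀ r : ℝ, 0 < r →
      μ {ω : ℕ → ℕ | ∀ n : ℕ, (n : ℝ) ≤ r * x → ω n ≠ 0} ≤ ENNReal.ofReal (r ^ (-γ))) :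
    μ {ω : ℕ → ℕ | ∃ n : ℕ, ω n = 0} = 1 := by
  have hlim : Tendsto (fun r : ℝ => ENNReal.ofReal (r ^ (-γ))) atTop (𝓝 0) := by
    simpa using ENNReal.tendsto_ofReal (tendsto_rpow_neg_atTop hγ)
  have hmeas : MeasurableSet {ω : ℕ → ℕ | ∃ n : ℕ, ω n = 0} := by
    rw [Set.ofPred_exists]
    exact .iUnion fun n => measurable_pi_apply n (MeasurableSet.singleton 0)
  refine (MeasureTheory.prob_compl_eq_zero_iff hmeas).1
    (nonpos_iff_eq_zero.1 (ge_of_tendsto hlim ?_))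
  filter_upwards [eventually_gt_atTop 0] with r hr
  refine (MeasureTheory.measure_mono ?_).trans (h r hr)
  exact fun ω hω n _ hn => hω ⟨n, hn⟩

end Chain

section Kernel

/-- The transition weight of the chain from `p ≥ 1` to `q`. -/
noncomputable def kernelWeight (z : ℕ → ℕ → ℝ) (a : ℕ → ℝ) (p q : ℕ) : ℝ :=
  (if q = p + 2 then tc * (a (p + 2) / a p) * uc else 0)
  + (if q = p + 1 then
      (∑' k : ℕ, tc * (a (p + 1) / a p) * z 1 k * uc ^ (k + 1))
        + tc * z 1 0 * (a (p + 1) / a p) * uc else 0)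
  + (if q = p then
      nuc * tc / uc + (∑' k : ℕ, nuc * tc * z 0 (k + 1) * uc ^ k)
        + nuc * tc * z 0 1 else 0)
  + (∑ k ∈ Finset.Icc 1 p, if q = p - k + 1 then
      tc * z (k + 1) 0 * (a (p - k + 1) / a p) * uc else 0)
  + (∑ k ∈ Finset.Icc 1 p, if q = p - k then
      nuc * tc * z k 1 * (a (p - k) / a p) else 0)
  + (if q = 1 then ∑' k : ℕ, tc * z (p + 1) (k + 1) * (a 1 / a p) * uc ^ (k + 2) else 0)
  + (if q = 0 then ∑' k : ℕ, nuc * tc * z p (k + 2) * (a 0 / a p) * uc ^ (k + 1) else 0)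

variable {z : ℕ → ℕ → ℝ} {a : ℕ → ℝ} {p q : ℕ}

theorem kernelWeight_eq_zero_of_add_two_lt (h : p + 2 < q) : kernelWeight z a p q = 0 := by
  rw [kernelWeight, if_neg (by omega), if_neg (by omega), if_neg (by omega), if_neg (by omega),
    if_neg (by omega), Finset.sum_eq_zero fun k _ => if_neg (by omega),
    Finset.sum_eq_zero fun k _ => if_neg (by omega)]
  simp only [add_zero]

theorem le_kernelWeight_zero (hz : ∀ p q, 0 ≤ z p q) (ha : ∀ p, 0 < a p) (hp : 1 ≤ p) :
    nuc * tc * z p 1 * (a 0 / a p) ≤ kernelWeight z a p 0 := by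
  have := nuc_pos
  have := tc_pos
  have := uc_pos
  have hdown (k : ℕ) (_ : k ∈ Finset.Icc 1 p) :
      0 ≤ if 0 = p - k then nuc * tc * z k 1 * (a (p - k) / a p) else 0 := by
    have := hz k 1
    have := div_pos (ha (p - k)) (ha p)
    positivity
  have htail : 0 ≤ ∑' k : ℕ, nuc * tc * z p (k + 2) * (a 0 / a p) * uc ^ (k + 1) :=
    tsum_nonneg fun k => by
      have := hz p (k + 2)
      have := div_pos (ha 0) (ha p)
      positivity
  have hjump := Finset.single_le_sum hdown (Finset.mem_Icc.2 ⟨hp, le_rfl⟩)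
  rw [Nat.sub_self, if_pos rfl] at hjump
  rw [kernelWeight, if_neg (by omega), if_neg (by omega), if_neg (by omega),
    Finset.sum_eq_zero fun k _ => if_neg (by omega), if_neg (by omega), if_pos rfl]
  linarith

theorem exists_div_le_kernelWeight_zero (hz : ∀ p q, 0 ≤ z p q) (ha : ∀ p, 0 < a p) {c : ℝ}
    (hc : 0 < c) (hcz : ∀ n : ℕ, c * a n ≤ (n + 2) * z n 1) :
    ∃ c' : ℝ, 0 < c' ∧ ∀ p : ℕ, 1 ≤ p → c' / p ≤ kernelWeight z a p 0 := by
  have hnuc := nuc_pos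
  have htc := tc_pos
  have ha0 := ha 0
  refine ⟨nuc * tc * a 0 * c / 3, by positivity, fun p hp => ?_⟩
  have hap := ha p
  have hp1 : (1 : ℝ) ≤ p := Nat.one_le_cast.2 hp
  have hratio : c / (3 * p) ≤ z p 1 / a p := by
    rw [div_le_div_iff₀ (by positivity) hap]
    nlinarith [hcz p, hz p 1]
  calc nuc * tc * a 0 * c / 3 / p = nuc * tc * a 0 * (c / (3 * p)) := by
        field_simp
    _ ≤ nuc * tc * a 0 * (z p 1 / a p) := by gcongr
    _ = nuc * tc * z p 1 * (a 0 / a p) := by ring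
    _ ≤ kernelWeight z a p 0 := le_kernelWeight_zero hz ha hp

end Kernel

/-- there is `γ₀ > 0` such that the hitting time `T₀` of `0` by the chain
`(P_n)` started from `p ≥ 1` satisfies `ℙ_p(T₀ > Λp) ≤ Λ^{−γ₀}` for all `Λ > 0`; in
particular `T₀ < ∞` almost surely. -/
theorem statement13
    (ρ : ℝ) (hρ : 0 < ρ)
    (z : ℕ → ℕ → ℝ) (hz_nonneg : ∀ p q, 0 ≤ z p q)
    -- `z p 0` are the Taylor coefficients of `Z₀ = Ẑ₀ ∘ û⁻¹` at `0`
    (hz0 : ∀ H : ℂ, ‖H‖ < ρ →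
      HasSum (fun p : ℕ => (z p 0 : ℂ) * uhat H ^ p) (Z0hat H))
    -- `z p q` are the Taylor coefficients at `(0,0)` of the solution `Z(u,v)` of the
    -- algebraic equation, expressed through the parametrization `u = û(H)`, `v = û(K)`
    (hZ : ∀ H K : ℂ, ‖H‖ < ρ → ‖K‖ < ρ → ∃ ZHK : ℂ,
      HasSum (fun pq : ℕ × ℕ => (z pq.1 pq.2 : ℂ) * uhat H ^ pq.1 * uhat K ^ pq.2) ZHK ∧
      ((nuc : ℂ) * uhat K * uhat H - uhat H ^ 2
          - ((nuc : ℂ) ^ 2 - 1) * (tc : ℂ) * uhat K * (Z0hat H + uhat H * Z1hat K))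
          * (ZHK - Z0hat K)
        = uhat H ^ 2 * (Z0hat K - Z0hat H)
          + ((nuc : ℂ) ^ 2 - 1) * uhat H * uhat K * (uhat H ^ 2 - (tc : ℂ) * Z0hat H * Z1hat K))
    (a : ℕ → ℝ) (ha_pos : ∀ p, 0 < a p)
    -- `a p` are the Taylor coefficients of `A = Â ∘ û⁻¹` at `0`
    (hA : ∀ H : ℂ, ‖H‖ < ρ →
      HasSum (fun p : ℕ => (a p : ℂ) * uhat H ^ p) (Ahat H))
    -- the transition kernel of the Markov chain `(P_n)`; the state `0` is absorbing
    (K : ℕ → ℕ → ℝ)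
    (hK0 : ∀ q : ℕ, K 0 q = if q = 0 then 1 else 0)
    (hK : ∀ p : ℕ, 1 ≤ p → ∀ q : ℕ, K p q =
      (if q = p + 2 then tc * (a (p + 2) / a p) * uc else 0)
      + (if q = p + 1 then
          (∑' k : ℕ, tc * (a (p + 1) / a p) * z 1 k * uc ^ (k + 1))
            + tc * z 1 0 * (a (p + 1) / a p) * uc else 0)
      + (if q = p then
          nuc * tc / uc + (∑' k : ℕ, nuc * tc * z 0 (k + 1) * uc ^ k)
            + nuc * tc * z 0 1 else 0)
      + (∑ k ∈ Finset.Icc 1 p, if q = p - k + 1 then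
          tc * z (k + 1) 0 * (a (p - k + 1) / a p) * uc else 0)
      + (∑ k ∈ Finset.Icc 1 p, if q = p - k then
          nuc * tc * z k 1 * (a (p - k) / a p) else 0)
      + (if q = 1 then ∑' k : ℕ, tc * z (p + 1) (k + 1) * (a 1 / a p) * uc ^ (k + 2) else 0)
      + (if q = 0 then ∑' k : ℕ, nuc * tc * z p (k + 2) * (a 0 / a p) * uc ^ (k + 1) else 0))
    -- `Pm p` is the law of the trajectory of the chain started from `p`,
    -- determined by its finite-dimensional (cylinder) distributions
    (Pm : ℕ → MeasureTheory.Measure (ℕ → ℕ))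
    (hprob : ∀ p, MeasureTheory.IsProbabilityMeasure (Pm p))
    (hchain : ∀ p n : ℕ, ∀ s : ℕ → ℕ,
      Pm p {ω : ℕ → ℕ | ∀ i ≤ n, ω i = s i}
        = ENNReal.ofReal ((if s 0 = p then 1 else 0)
            * ∏ i ∈ Finset.range n, K (s i) (s (i + 1))))
    :
    ∃ γ₀ : ℝ, 0 < γ₀ ∧
      (∀ p : ℕ, 1 ≤ p → ∀ Λ : ℝ, 0 < Λ →
        Pm p {ω : ℕ → ℕ | ∀ n : ℕ, (n : ℝ) ≤ Λ * p → ω n ≠ 0}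
          ≤ ENNReal.ofReal (Λ ^ (-γ₀))) ∧
      (∀ p : ℕ, 1 ≤ p → Pm p {ω : ℕ → ℕ | ∃ n : ℕ, ω n = 0} = 1) := by
  obtain ⟨c, hc, hcz⟩ := SolvesKernelEquation.exists_mul_le_add_two_mul hZ hρ hA
  obtain ⟨c', hc', hkill⟩ := exists_div_le_kernelWeight_zero hz_nonneg ha_pos hc hcz
  have hK_jump (p q : ℕ) (hpq : p + 2 < q) : K p q = 0 := by
    rcases p.eq_zero_or_pos with rfl | hp
    · rw [hK0, if_neg (by omega)]
    · exact (hK p hp q).trans (kernelWeight_eq_zero_of_add_two_lt hpq)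
  have hK_zero (p : ℕ) (hp : 1 ≤ p) : c' / p ≤ K p 0 := (hkill p hp).trans_eq (hK p hp 0).symm
  have htail (p : ℕ) (hp : 1 ≤ p) (r : ℝ) (hr : 0 < r) :=
    IsChainLaw.measure_survival_le (hchain p) two_pos hK_jump hc'.le hK_zero hp hr
  exact ⟨c' / (2 : ℕ), by positivity, htail, fun p hp =>
    measure_exists_eq_zero_of_survival_le (by positivity) (htail p hp)⟩
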